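/- Let U ⊆ E × F be open and convex, let g : E × F → G be C² on U, and let p = (x₀, y₀) ∈ U with s₀ = g(x₀, y₀). Let J_y : F →L[ℝ] G be the partial Jacobian of g at p with respect to the second variable. Then for every M ≥ 0 there exist constants C > 0 and δ > 0 such that for every finite index set N and family of points (x_j, y_j) ∈ U, j ∈ N, satisfying ‖(x_j, y_j) − (x₀, y₀)‖ ≤ δ and ‖x_j − x₀‖ ≤ M · ‖y_j − y₀‖² for all j ∈ N, one has ‖Σ_{j ∈ N} outer(g(x_j, y_j) − s₀) − J_y ∘ (Σ_{j ∈ N} outer(y_j − y₀)) ∘ J_y^*‖ ≤ C · Σ_{j ∈ N} ‖y_j − y₀‖³ (operator norm). -/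

import Mathlib

/-!
The conjugate `J ∘ outer h ∘ J†` is `outer (J h)`, so the left-hand side is a sum of differences
`outer v - outer a` with `v = g (x, y) - s₀`, `a = J_y (y - y₀)`, and each has norm at most
`‖v - a‖ * (‖v‖ + ‖a‖)`. Since `g` is `C²`, its first-order Taylor remainder at `(x₀, y₀)` is
quadratic, and the hypothesis `‖x - x₀‖ ≤ M ‖y - y₀‖²` makes the contribution of `x` to the
linear term quadratic in `‖y - y₀‖` as well. Hence `‖v - a‖ = O(‖y - y₀‖²)` and
`‖v‖ + ‖a‖ = O(‖y - y₀‖)`, and the difference is cubic, with a constant that does not depend on the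
point; the claim follows by summation.
-/

/-- The rank-one outer product operator `v vᵀ : w ↦ ⟪v, w⟫ • v`. -/
noncomputable def outer {G : Type*} [NormedAddCommGroup G] [InnerProductSpace ℝ G]
    (v : G) : G →L[ℝ] G :=
  (innerSL ℝ v).smulRight v

/-- First-order Taylor estimate: near a point where `g` is `C²`, the derivative is Lipschitz, so
the mean value inequality bounds the linearization error by a multiple of the squared distance. -/
lemma exists_taylor_bound {V G : Type*} [NormedAddCommGroup V] [NormedSpace ℝ V]
    [NormedAddCommGroup G] [NormedSpace ℝ G] {g : V → G} {p : V} (hg : ContDiffAt ℝ 2 g p) :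
    ∃ K ≥ 0, ∃ r > 0, ∀ q : V, ‖q - p‖ ≤ r →
      ‖g q - g p - fderiv ℝ g p (q - p)‖ ≤ K * ‖q - p‖ ^ 2 := by
  have h1 : ContDiffAt ℝ 1 (fderiv ℝ g) p := hg.fderiv_right (by norm_num)
  obtain ⟨K, t, ht, hK⟩ := h1.exists_lipschitzOnWith
  have hd : ∀ᶠ q in nhds p, DifferentiableAt ℝ g q :=
    (hg.eventually (by simp)).mono fun q hq => hq.differentiableAt (by norm_num)
  obtain ⟨r, hr, hball⟩ := Metric.nhds_basis_closedBall.mem_iff.1 (Filter.inter_mem ht hd)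
  refine ⟨K, K.2, r, hr, fun q hq => ?_⟩
  have hsub : Metric.closedBall p ‖q - p‖ ⊆ Metric.closedBall p r :=
    Metric.closedBall_subset_closedBall hq
  have hpp : p ∈ t := (hball (Metric.mem_closedBall_self hr.le)).1
  have key := (convex_closedBall p ‖q - p‖).norm_image_sub_le_of_norm_fderiv_le'
    (𝕜 := ℝ) (f := g) (φ := fderiv ℝ g p) (C := K * ‖q - p‖)
    (fun z hz => (hball (hsub hz)).2)
    (fun z hz => by
      have h2 := hK.norm_sub_le (hball (hsub hz)).1 hpp
      refine h2.trans ?_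
      have h3 : ‖z - p‖ ≤ ‖q - p‖ := by simpa [dist_eq_norm] using hz
      gcongr)
    (Metric.mem_closedBall_self (norm_nonneg _))
    (show q ∈ Metric.closedBall p ‖q - p‖ by simp [dist_eq_norm])
  linarith

lemma norm_outer_sub_outer_le {G : Type*} [NormedAddCommGroup G] [InnerProductSpace ℝ G]
    (v a : G) : ‖outer v - outer a‖ ≤ ‖v - a‖ * (‖v‖ + ‖a‖) := by
  refine ContinuousLinearMap.opNorm_le_bound _ (by positivity) fun w => ?_
  have h : (outer v - outer a) w = inner ℝ v w • (v - a) + inner ℝ (v - a) w • a := by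
    simp only [outer, _root_.sub_apply, ContinuousLinearMap.smulRight_apply,
      innerSL_apply_apply, inner_sub_left, smul_sub, sub_smul]
    abel
  rw [h]
  refine (norm_add_le _ _).trans ?_
  rw [norm_smul, norm_smul]
  have h1 := norm_inner_le_norm (𝕜 := ℝ) v w
  have h2 := norm_inner_le_norm (𝕜 := ℝ) (v - a) w
  calc _ ≤ ‖v‖ * ‖w‖ * ‖v - a‖ + ‖v - a‖ * ‖w‖ * ‖a‖ := by gcongr
    _ = _ := by ring

lemma conj_outer {F G : Type*}
    [NormedAddCommGroup F] [InnerProductSpace ℝ F] [FiniteDimensional ℝ F]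
    [NormedAddCommGroup G] [InnerProductSpace ℝ G] [FiniteDimensional ℝ G]
    (J : F →L[ℝ] G) (h : F) :
    J ∘L outer h ∘L ContinuousLinearMap.adjoint J = outer (J h) := by
  ext w
  simp [outer, ContinuousLinearMap.adjoint_inner_right]

/-- First equality of equation (18): over an AD neighborhood, the empirical
covariance of the observed samples equals the conjugation by `J_y` of the
empirical covariance of the sensor-specific variable, up to cubic error. -/
theorem stmt_2
    {E F G : Type*}
    [NormedAddCommGroup E] [InnerProductSpace ℝ E] [FiniteDimensional ℝ E]
    [NormedAddCommGroup F] [InnerProductSpace ℝ F] [FiniteDimensional ℝ F]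
    [NormedAddCommGroup G] [InnerProductSpace ℝ G] [FiniteDimensional ℝ G]
    (U : Set (E × F)) (hUopen : IsOpen U) (hUconv : Convex ℝ U)
    (g : E × F → G) (hg : ContDiffOn ℝ 2 g U)
    (x₀ : E) (y₀ : F) (hp : (x₀, y₀) ∈ U)
    (s₀ : G) (hs₀ : s₀ = g (x₀, y₀))
    (Jy : F →L[ℝ] G)
    (hJy : Jy = (fderiv ℝ g (x₀, y₀)).comp (ContinuousLinearMap.inr ℝ E F))
    (M : ℝ) (hM : 0 ≤ M) :
    ∃ C > 0, ∃ δ > 0, ∀ (ι : Type) (N : Finset ι) (x : ι → E) (y : ι → F),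
      (∀ j ∈ N, (x j, y j) ∈ U) →
      (∀ j ∈ N, ‖((x j, y j) : E × F) - (x₀, y₀)‖ ≤ δ) →
      (∀ j ∈ N, ‖x j - x₀‖ ≤ M * ‖y j - y₀‖ ^ 2) →
      ‖(∑ j ∈ N, outer (g (x j, y j) - s₀)) -
          Jy ∘L (∑ j ∈ N, outer (y j - y₀)) ∘L (ContinuousLinearMap.adjoint Jy)‖ ≤
        C * ∑ j ∈ N, ‖y j - y₀‖ ^ 3 := by
  obtain ⟨K, hK, r, hr, hT⟩ := exists_taylor_bound (hg.contDiffAt (hUopen.mem_nhds hp))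
  set D := fderiv ℝ g (x₀, y₀) with hD
  set B : ℝ := K * (M + 1) ^ 2 + ‖D‖ * M with hB
  have hB0 : 0 ≤ B := by positivity
  -- The bound `1` on the radius gives `‖y - y₀‖ ^ 2 ≤ ‖y - y₀‖`.
  refine ⟨B * (2 * ‖Jy‖ + B) + 1, by positivity, min r 1, by positivity, ?_⟩
  intro ι N x y _ hδ hx
  have hsum : Jy ∘L (∑ j ∈ N, outer (y j - y₀)) ∘L (ContinuousLinearMap.adjoint Jy) =
      ∑ j ∈ N, outer (Jy (y j - y₀)) := by
    simp_rw [← conj_outer, ContinuousLinearMap.finsetSum_comp, ContinuousLinearMap.comp_finsetSum]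
  rw [hsum, ← Finset.sum_sub_distrib, Finset.mul_sum]
  refine norm_sum_le_of_le _ fun j hj => ?_
  have hq := hδ j hj
  have hxj := hx j hj
  have hTj := hT _ (hq.trans (min_le_left _ _))
  have hh1 : ‖y j - y₀‖ ≤ 1 :=
    (norm_snd_le ((x j, y j) - (x₀, y₀))).trans (hq.trans (min_le_right _ _))
  have hpair : ((x j, y j) : E × F) - (x₀, y₀) = (x j - x₀, y j - y₀) := rfl
  rw [hpair] at hTj
  generalize x j - x₀ = k at *
  generalize y j - y₀ = h at *
  have hh0 := norm_nonneg h
  have hsq : ‖h‖ ^ 2 ≤ ‖h‖ := by nlinarith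
  have hkh : ‖(k, h)‖ ≤ (M + 1) * ‖h‖ := by
    rw [Prod.norm_mk]
    exact max_le (by nlinarith) (by nlinarith)
  have hsplit : D (k, h) = D (k, 0) + Jy h := by
    rw [hJy, ContinuousLinearMap.comp_apply, ← map_add]
    simp
  have hDk : ‖D (k, 0)‖ ≤ ‖D‖ * (M * ‖h‖ ^ 2) := by
    refine (D.le_opNorm _).trans ?_
    have : ‖((k, 0) : E × F)‖ = ‖k‖ := by simp [Prod.norm_mk]
    rw [this]
    gcongr
  have hva : ‖(g (x j, y j) - s₀) - Jy h‖ ≤ B * ‖h‖ ^ 2 := by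
    have e : (g (x j, y j) - s₀) - Jy h =
        (g (x j, y j) - g (x₀, y₀) - D (k, h)) + D (k, 0) := by
      rw [hsplit, hs₀]; abel
    rw [e]
    calc _ ≤ K * ((M + 1) * ‖h‖) ^ 2 + ‖D‖ * (M * ‖h‖ ^ 2) := by
          refine norm_add_le_of_le (hTj.trans ?_) hDk
          gcongr
      _ = _ := by rw [hB]; ring
  generalize g (x j, y j) - s₀ = v at *
  have ha : ‖Jy h‖ ≤ ‖Jy‖ * ‖h‖ := Jy.le_opNorm h
  have hv : ‖v‖ ≤ ‖Jy‖ * ‖h‖ + B * ‖h‖ := by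
    have h1 : ‖v‖ ≤ ‖Jy h‖ + ‖v - Jy h‖ := norm_le_insert' _ _
    nlinarith
  calc _ ≤ ‖v - Jy h‖ * (‖v‖ + ‖Jy h‖) := norm_outer_sub_outer_le _ _
    _ ≤ (B * ‖h‖ ^ 2) * ((‖Jy‖ * ‖h‖ + B * ‖h‖) + ‖Jy‖ * ‖h‖) := by gcongr
    _ ≤ (B * (2 * ‖Jy‖ + B) + 1) * ‖h‖ ^ 3 := by
      have : 0 ≤ ‖h‖ ^ 3 := by positivity
      linarith
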